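/- arXiv:2504.03211 — 2 statements merged into one kernel-verified Lean document; each statement's English description precedes it below -/
import Mathlib

section
/- Fix any t ≥ 1 and ε ≥ 0, any perfectly calibrated predictor g̃, and any post-processing plan χ that is feasible for (g̃, ε, t). Then the predictor f generated by (g̃, χ) is well-defined (each f_i is a finitely supported probability distribution on [0,1]) and is (ε,ℓ_t)-calibrated, i.e., ECE_t(f) ≤ ε. -/
open Finset

noncomputable section

namespace PersuasiveCalibration

/-- The environment of the persuasive calibration problem: `n` events with
probabilities `lam i > 0` summing to one and sorted expected outcomes `theta i ∈ [0,1]`. -/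
structure Setup (n : ℕ) : Type where
  lam : Fin n → ℝ
  theta : Fin n → ℝ
  lam_pos : ∀ i, 0 < lam i
  lam_sum : ∑ i, lam i = 1
  theta_mono : Monotone theta
  theta_mem : ∀ i, theta i ∈ Set.Icc (0 : ℝ) 1

variable {n : ℕ}

/-- A finitely supported probability distribution on `[0,1]`. -/
def IsDist (μ : ℝ →₀ ℝ) : Prop :=
  (∀ p, 0 ≤ μ p) ∧ (∀ p ∈ μ.support, p ∈ Set.Icc (0 : ℝ) 1) ∧ (∑ p ∈ μ.support, μ p) = 1

/-- A predictor assigns to each event a finitely supported probability distribution on `[0,1]`. -/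
def IsPredictor (f : Fin n → ℝ →₀ ℝ) : Prop := ∀ i, IsDist (f i)

/-- The (unconditional) prediction space of a predictor. -/
def suppF (f : Fin n → ℝ →₀ ℝ) : Finset ℝ := Finset.univ.biUnion fun i => (f i).support

/-- The marginalized predictor `f(p) = ∑ i, λ i * f i p`. -/
def marginal (S : Setup n) (f : Fin n → ℝ →₀ ℝ) (p : ℝ) : ℝ := ∑ i, S.lam i * f i p

/-- The true expected outcome conditional on the prediction `p`. -/
def kappa (S : Setup n) (f : Fin n → ℝ →₀ ℝ) (p : ℝ) : ℝ :=
  (∑ i, S.lam i * f i p * S.theta i) / marginal S f p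

/-- The `ℓ_t`-norm expected calibration error of a predictor. -/
def ECE (S : Setup n) (t : ℝ) (f : Fin n → ℝ →₀ ℝ) : ℝ :=
  (∑ p ∈ suppF f, marginal S f p * |kappa S f p - p| ^ t) ^ (1 / t)

/-- The principal's expected payoff from predictor `f` with indirect utilities `U i`. -/
def payoff (S : Setup n) (U : Fin n → ℝ → ℝ) (f : Fin n → ℝ →₀ ℝ) : ℝ :=
  ∑ i, S.lam i * ∑ p ∈ (f i).support, f i p * U i p

/-- The principal's payoff in the event-independent setting. -/
def payoffEI (S : Setup n) (U : ℝ → ℝ) (f : Fin n → ℝ →₀ ℝ) : ℝ :=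
  payoff S (fun _ => U) f

/-- A predictor is perfectly calibrated if `κ(q) = q` on its support. -/
def PerfectlyCalibrated (S : Setup n) (g : Fin n → ℝ →₀ ℝ) : Prop :=
  ∀ q ∈ suppF g, kappa S g q = q

/-- An event-independent post-processing plan: a finitely supported probability
distribution on `[0,1] × [0,1]`; the first coordinate is `q`, the second is `p`. -/
def IsPlan (χ : ℝ × ℝ →₀ ℝ) : Prop :=
  (∀ x, 0 ≤ χ x) ∧ (∀ x ∈ χ.support, x.1 ∈ Set.Icc (0 : ℝ) 1 ∧ x.2 ∈ Set.Icc (0 : ℝ) 1) ∧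
    (∑ x ∈ χ.support, χ x) = 1

/-- The `ℓ_t` calibration cost `∑ χ(q,p) |q - p|^t` of a plan. -/
def planCost (t : ℝ) (χ : ℝ × ℝ →₀ ℝ) : ℝ := ∑ x ∈ χ.support, χ x * |x.1 - x.2| ^ t

/-- The `q`-marginal `∑_p χ(q, p)` of a plan. -/
def planMargQ (χ : ℝ × ℝ →₀ ℝ) (q : ℝ) : ℝ :=
  ∑ x ∈ χ.support.filter fun x => x.1 = q, χ x

/-- Feasibility of a post-processing plan for a perfectly calibrated predictor `g` and
an `ℓ_t` ECE budget `ε`. -/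
def FeasiblePlan (S : Setup n) (t ε : ℝ) (g : Fin n → ℝ →₀ ℝ) (χ : ℝ × ℝ →₀ ℝ) : Prop :=
  planCost t χ ≤ ε ^ t ∧ ∀ q, planMargQ χ q = marginal S g q

/-- The value `f_i(p) = ∑_q (g̃_i(q)/g(q)) χ(q,p)` of the predictor generated by `(g̃, χ)`. -/
def genVal (S : Setup n) (g : Fin n → ℝ →₀ ℝ) (χ : ℝ × ℝ →₀ ℝ) (i : Fin n) (p : ℝ) : ℝ :=
  ∑ q ∈ suppF g, g i q / marginal S g q * χ (q, p)

/-- A predictor generated by some perfectly calibrated predictor and some feasible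
event-independent post-processing plan. -/
def IsGenerated (S : Setup n) (t ε : ℝ) (f : Fin n → ℝ →₀ ℝ) : Prop :=
  ∃ (g : Fin n → ℝ →₀ ℝ) (χ : ℝ × ℝ →₀ ℝ),
    IsPredictor g ∧ PerfectlyCalibrated S g ∧ IsPlan χ ∧ FeasiblePlan S t ε g χ ∧
      ∀ i p, f i p = genVal S g χ i p

/-- The CDF of a finitely supported distribution. -/
def cdf (μ : ℝ →₀ ℝ) (x : ℝ) : ℝ := ∑ q ∈ μ.support.filter fun q => q ≤ x, μ q

/-- The CDF of the distribution placing mass `λ_i` at `θ_i`. -/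
def priorCdf (S : Setup n) (x : ℝ) : ℝ :=
  ∑ i ∈ Finset.univ.filter fun i => S.theta i ≤ x, S.lam i

/-- `μ` is a mean-preserving contraction of the distribution putting mass `λ_i` on `θ_i`. -/
def MPCprior (S : Setup n) (μ : ℝ →₀ ℝ) : Prop :=
  (∀ s ∈ Set.Icc (0 : ℝ) 1,
      (∫ x in (0 : ℝ)..s, cdf μ x) ≤ ∫ x in (0 : ℝ)..s, priorCdf S x) ∧
    (∫ x in (0 : ℝ)..(1 : ℝ), cdf μ x) = ∫ x in (0 : ℝ)..(1 : ℝ), priorCdf S x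

/-- The objective `∑ χ(q,p) U(p)` of the program LP-TwoStep. -/
def LPobj (U : ℝ → ℝ) (χ : ℝ × ℝ →₀ ℝ) : ℝ := ∑ x ∈ χ.support, χ x * U x.2

/-- Feasibility for the program LP-TwoStep. -/
def LPFeasible (S : Setup n) (ε t : ℝ) (χ : ℝ × ℝ →₀ ℝ) (g : ℝ →₀ ℝ) : Prop :=
  (∀ x, 0 ≤ χ x) ∧
  (∀ x ∈ χ.support, x.1 ∈ Set.Icc (0 : ℝ) 1 ∧ x.2 ∈ Set.Icc (0 : ℝ) 1) ∧
  planCost t χ ≤ ε ^ t ∧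
  (∀ q, planMargQ χ q = g q) ∧ IsDist g ∧ MPCprior S g

/-- The optimal value of LP-TwoStep. -/
def OPTLP (S : Setup n) (ε t : ℝ) (U : ℝ → ℝ) : ℝ :=
  sSup {v | ∃ (χ : ℝ × ℝ →₀ ℝ) (g : ℝ →₀ ℝ), LPFeasible S ε t χ g ∧ v = LPobj U χ}

/-- Symmetric linear-tailed convex function with linear tails `[0, xL]`, `[xH, 1]` and
tail slopes `s1`, `s2` of equal absolute value. -/
def SymLinTailedConvex (Γ : ℝ → ℝ) (xL xH s1 s2 : ℝ) : Prop :=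
  ConvexOn ℝ (Set.Icc (0 : ℝ) 1) Γ ∧ 0 ≤ xL ∧ xL ≤ xH ∧ xH ≤ 1 ∧ |s1| = |s2| ∧
    (∃ c1, ∀ x ∈ Set.Icc (0 : ℝ) xL, Γ x = c1 + s1 * x) ∧
    (∃ c2, ∀ x ∈ Set.Icc xH (1 : ℝ), Γ x = c2 + s2 * x)

/-- Tuples `(i, j, q, p)` indexing a bi-event post-processing plan. -/
abbrev BiTuple (n : ℕ) := Fin n × Fin n × ℝ × ℝ

/-- The contribution ratio `r_{i,j}(q)`. -/
def ratio (S : Setup n) (i j : Fin n) (q : ℝ) : ℝ :=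
  if S.theta i < S.theta j then (S.theta j - q) / (S.theta j - S.theta i) else 1

/-- The contribution of the tuple `x = (i', j', q, p)` to event `i`:
`r_{i,j'}(q)` if `i' = i`, and `1 - r_{i',i}(q)` if `j' = i ≠ i'`. -/
def contrib (S : Setup n) (x : BiTuple n) (i : Fin n) : ℝ :=
  (if x.1 = i then ratio S x.1 x.2.1 x.2.2.1 else 0) +
    (if x.2.1 = i ∧ x.1 ≠ i then 1 - ratio S x.1 x.2.1 x.2.2.1 else 0)

/-- A bi-event post-processing plan. -/
def IsBiPlan (S : Setup n) (χ : BiTuple n →₀ ℝ) : Prop :=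
  (∀ x, 0 ≤ χ x) ∧
    ∀ x ∈ χ.support, x.1 ≤ x.2.1 ∧ x.2.2.1 ∈ Set.Icc (0 : ℝ) 1 ∧
      x.2.2.2 ∈ Set.Icc (0 : ℝ) 1 ∧ S.theta x.1 ≤ x.2.2.1 ∧ x.2.2.1 ≤ S.theta x.2.1

/-- Feasibility of a bi-event post-processing plan for `ℓ_t` ECE budget `ε`. -/
def FeasibleBiPlan (S : Setup n) (t ε : ℝ) (χ : BiTuple n →₀ ℝ) : Prop :=
  IsBiPlan S χ ∧
    (∑ x ∈ χ.support, χ x * |x.2.2.1 - x.2.2.2| ^ t) ≤ ε ^ t ∧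
    ∀ i, (∑ x ∈ χ.support, χ x * contrib S x i) = S.lam i

/-- The value `f_i(p)` of the predictor generated by a bi-event post-processing plan. -/
def genValBi (S : Setup n) (χ : BiTuple n →₀ ℝ) (i : Fin n) (p : ℝ) : ℝ :=
  1 / S.lam i * ∑ x ∈ χ.support.filter fun x => x.2.2.2 = p, χ x * contrib S x i

/-- The objective of LP-TwoStep+: `∑ χ_{i,j}(q,p) U_{i,j}(q,p)`. -/
def biObj (S : Setup n) (U : Fin n → ℝ → ℝ) (χ : BiTuple n →₀ ℝ) : ℝ :=
  ∑ x ∈ χ.support, χ x * (ratio S x.1 x.2.1 x.2.2.1 * U x.1 x.2.2.2 +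
    (1 - ratio S x.1 x.2.1 x.2.2.1) * U x.2.1 x.2.2.2)

/-- The optimal value of LP-TwoStep+. -/
def OPTBi (S : Setup n) (U : Fin n → ℝ → ℝ) (t ε : ℝ) : ℝ :=
  sSup {v | ∃ χ : BiTuple n →₀ ℝ, FeasibleBiPlan S t ε χ ∧ v = biObj S U χ}

/-- `U` is piecewise constant with all its discontinuity points in `Z`. -/
def PiecewiseConstWrt (Z : Finset ℝ) (U : ℝ → ℝ) : Prop :=
  ∀ x ∈ Set.Icc (0 : ℝ) 1, ∀ y ∈ Set.Icc (0 : ℝ) 1,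
    (∀ z ∈ Z, z ∉ Set.uIcc x y) → U x = U y

/-- The bound `S = ⌈2 ln(1/δ) / ln(1+δ)⌉` of the second discretization layer. -/
def Sbound (δ : ℝ) : ℕ := ⌈2 * Real.log (1 / δ) / Real.log (1 + δ)⌉₊

/-- The instance-dependent two-layer discretized set `S_δ`. -/
def gridSet (S : Setup n) (Z : Finset ℝ) (ε t δ : ℝ) : Set ℝ :=
  ({x : ℝ | ∃ k : ℕ, x = (k : ℝ) * δ} ∪ {(1 : ℝ)} ∪ Set.range S.theta ∪ (↑Z : Set ℝ) ∪
      {x : ℝ | ∃ z ∈ (↑Z : Set ℝ) ∪ Set.range S.theta, ∃ s : ℕ, s ≤ Sbound δ ∧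
        (x = z + (ε ^ t * δ * (1 + δ) ^ s) ^ (1 / t) ∨
          x = z - (ε ^ t * δ * (1 + δ) ^ s) ^ (1 / t))}) ∩
    Set.Icc (0 : ℝ) 1

/-- Feasibility for the discretized program LP-DiscTwoStep+. -/
def DiscFeasibleBiPlan (S : Setup n) (Z : Finset ℝ) (t ε δ : ℝ) (χ : BiTuple n →₀ ℝ) : Prop :=
  FeasibleBiPlan S t ε χ ∧
    ∀ x ∈ χ.support, x.2.2.1 ∈ gridSet S Z ε t δ ∧ x.2.2.2 ∈ gridSet S Z ε t δ

/-- The optimal value of LP-DiscTwoStep+. -/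
def OPTBiDisc (S : Setup n) (U : Fin n → ℝ → ℝ) (Z : Finset ℝ) (t ε δ : ℝ) : ℝ :=
  sSup {v | ∃ χ : BiTuple n →₀ ℝ, DiscFeasibleBiPlan S Z t ε δ χ ∧ v = biObj S U χ}

/-- A Bayesian persuasion instance with signal-dependent bias: states `θ_i` with
prior `λ`, actions `A`, sender utility `u a i = u(a, θ_i) ≥ 0`, and receiver utility
determined by `v1 a = v(a,1)` and `v0 a = v(a,0)`. -/
structure PSetup (n : ℕ) (A : Type*) : Type _ where
  lam : Fin n → ℝ
  theta : Fin n → ℝ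
  u : A → Fin n → ℝ
  v1 : A → ℝ
  v0 : A → ℝ
  lam_pos : ∀ i, 0 < lam i
  lam_sum : ∑ i, lam i = 1
  theta_mem : ∀ i, theta i ∈ Set.Icc (0 : ℝ) 1
  u_nonneg : ∀ a i, 0 ≤ u a i

variable {A σT : Type*}

/-- The receiver's utility from action `a` at belief mean `x`. -/
def rcvU (P : PSetup n A) (a : A) (x : ℝ) : ℝ := x * P.v1 a + (1 - x) * P.v0 a

/-- The total probability `m(σ)` of a signal `σ`. -/
def mass [Fintype σT] (P : PSetup n A) (π : Fin n → σT → ℝ) (σ : σT) : ℝ :=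
  ∑ i, P.lam i * π i σ

/-- The biased posterior mean `p(σ)` of the receiver upon signal `σ`. -/
def belief [Fintype σT] (P : PSetup n A) (π : Fin n → σT → ℝ) (b : σT → ℝ) (σ : σT) : ℝ :=
  (b σ + ∑ i, P.lam i * π i σ * P.theta i) / mass P π σ

/-- Validity of a sender strategy `(π, b)`. -/
def ValidStrategy [Fintype σT] (P : PSetup n A) (π : Fin n → σT → ℝ) (b : σT → ℝ) : Prop :=
  (∀ i σ, 0 ≤ π i σ) ∧ (∀ i, ∑ σ, π i σ = 1) ∧
    ∀ σ, 0 < mass P π σ → belief P π b σ ∈ Set.Icc (0 : ℝ) 1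

/-- `astar` is a receiver best-response selection for the strategy `(π, b)`. -/
def BestResponse [Fintype σT] (P : PSetup n A) (π : Fin n → σT → ℝ) (b : σT → ℝ)
    (astar : σT → A) : Prop :=
  ∀ σ, 0 < mass P π σ → ∀ a, rcvU P a (belief P π b σ) ≤ rcvU P (astar σ) (belief P π b σ)

/-- The bounded-rationality constraint on the total bias. -/
def BRconstraint [Fintype σT] (P : PSetup n A) (t ε : ℝ) (π : Fin n → σT → ℝ)
    (b : σT → ℝ) : Prop :=
  (∑ σ, mass P π σ * |b σ / mass P π σ| ^ t) ^ (1 / t) ≤ ε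

/-- The sender's expected payoff from strategy `π` with receiver selection `astar`. -/
def senderPayoff [Fintype σT] (P : PSetup n A) (π : Fin n → σT → ℝ) (astar : σT → A) : ℝ :=
  ∑ i, P.lam i * ∑ σ, π i σ * P.u (astar σ) i

/-- Feasibility for the action-recommendation program P-ActRec. -/
def PActRecFeasible [Fintype A] (P : PSetup n A) (t ε : ℝ)
    (π : Fin n → A → ℝ) (b : A → ℝ) : Prop :=
  (∀ i a, 0 ≤ π i a) ∧ (∀ i, ∑ a, π i a = 1) ∧
  (∀ a, mass P π a = 0 → b a = 0) ∧
  (∑ a, mass P π a * |b a / mass P π a| ^ t) ≤ ε ^ t ∧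
  (∀ a, 0 ≤ b a + ∑ i, P.lam i * π i a * P.theta i) ∧
  (∀ a, b a + ∑ i, P.lam i * π i a * P.theta i ≤ mass P π a) ∧
  ∀ a a' : A,
    (b a + ∑ i, P.lam i * π i a * P.theta i) * P.v1 a' +
        (mass P π a - (b a + ∑ i, P.lam i * π i a * P.theta i)) * P.v0 a' ≤
      (b a + ∑ i, P.lam i * π i a * P.theta i) * P.v1 a +
        (mass P π a - (b a + ∑ i, P.lam i * π i a * P.theta i)) * P.v0 a

/-- The sender-side marginal probability of recommendation `a` (calibration model). -/
def pmass [Fintype A] (S : Setup n) (π : Fin n → A → ℝ) (a : A) : ℝ := ∑ i, S.lam i * π i a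

/-- The biased posterior mean associated with recommendation `a` (calibration model). -/
def pbelief [Fintype A] (S : Setup n) (π : Fin n → A → ℝ) (b : A → ℝ) (a : A) : ℝ :=
  (b a + ∑ i, S.lam i * π i a * S.theta i) / pmass S π a

/-!
Writing `f_i(p) = ∑_q (g̃_i(q) / g(q)) χ(q, p)`, the factor `g(q)` cancels when events are averaged
out, so `f(p) = ∑_q χ(q, p)`, and since `g̃` is perfectly calibrated, `κ(p)` is the mean of `q`
under the weights `χ(q, p)`. Jensen's inequality for the convex function `q ↦ |q - p|^t` then gives
`f(p) |κ(p) - p|^t ≤ ∑_q χ(q, p) |q - p|^t`, and summing over `p` bounds `ECE_t(f)^t` by the cost of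
the plan. The row `χ(q, ·)` has total mass `g(q)`, so the total mass of `f_i` is that of `g̃_i`;
total mass is expressed by `Finsupp.degree`, which is additive.
-/

section Convexity

theorem sum_smul_map_centerMass_le {𝕜 E β ι : Type*} [Field 𝕜] [LinearOrder 𝕜]
    [IsStrictOrderedRing 𝕜] [AddCommGroup E] [AddCommGroup β] [PartialOrder β]
    [IsOrderedAddMonoid β] [Module 𝕜 E] [Module 𝕜 β] [IsStrictOrderedModule 𝕜 β]
    {D : Set E} {φ : E → β} (hφ : ConvexOn 𝕜 D φ) {s : Finset ι} {w : ι → 𝕜} {z : ι → E}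
    (hw : ∀ i ∈ s, 0 ≤ w i) (hz : ∀ i ∈ s, z i ∈ D) :
    (∑ i ∈ s, w i) • φ (s.centerMass w z) ≤ ∑ i ∈ s, w i • φ (z i) := by
  rcases (sum_nonneg hw).eq_or_lt with hzero | hpos
  · have hw_zero : ∀ i ∈ s, w i = 0 := (sum_eq_zero_iff_of_nonneg hw).1 hzero.symm
    rw [← hzero, zero_smul, sum_eq_zero fun i hi => by rw [hw_zero i hi, zero_smul]]
  · calc (∑ i ∈ s, w i) • φ (s.centerMass w z)
        ≤ (∑ i ∈ s, w i) • s.centerMass w (φ ∘ z) :=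
          smul_le_smul_of_nonneg_left (hφ.map_centerMass_le hw hpos hz) hpos.le
      _ = ∑ i ∈ s, w i • φ (z i) := smul_inv_smul₀ hpos.ne' _

theorem convexOn_dist_rpow {E : Type*} [SeminormedAddCommGroup E] [NormedSpace ℝ E] {D : Set E}
    (hD : Convex ℝ D) (p : E) {t : ℝ} (ht : 1 ≤ t) : ConvexOn ℝ D fun x => dist x p ^ t := by
  refine ⟨hD, fun x hx y hy a b ha hb hab => ?_⟩
  calc dist (a • x + b • y) p ^ t
      ≤ (a • dist x p + b • dist y p) ^ t :=
        Real.rpow_le_rpow dist_nonneg ((convexOn_dist p hD).2 hx hy ha hb hab) (by linarith)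
    _ ≤ a • dist x p ^ t + b • dist y p ^ t :=
        (convexOn_rpow ht).2 dist_nonneg dist_nonneg ha hb hab

end Convexity

section Degree

theorem degree_eq_sum_of_support_subset {α R : Type*} [AddCommMonoid R] {μ : α →₀ R}
    {s : Finset α} (hs : μ.support ⊆ s) : μ.degree = ∑ a ∈ s, μ a :=
  sum_subset hs fun _ _ ha => Finsupp.notMem_support_iff.1 ha

theorem degree_smul {α R M : Type*} [AddCommMonoid R] [DistribSMul M R] (c : M) (μ : α →₀ R) :
    (c • μ).degree = c • μ.degree := by
  rw [degree_eq_sum_of_support_subset Finsupp.support_smul, Finsupp.degree_apply, smul_sum]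
  rfl

theorem planMargQ_eq_degree_curry (χ : ℝ × ℝ →₀ ℝ) (q : ℝ) :
    planMargQ χ q = (χ.curry q).degree := by
  refine sum_nbij' Prod.snd (fun p => (q, p)) ?_ ?_ ?_ ?_ ?_ <;> aesop

end Degree

section Predictor

variable {S : Setup n} {f : Fin n → ℝ →₀ ℝ}

theorem support_subset_suppF (f : Fin n → ℝ →₀ ℝ) (i : Fin n) : (f i).support ⊆ suppF f :=
  subset_biUnion_of_mem (fun i => (f i).support) (mem_univ i)

theorem marginal_nonneg (hf : ∀ i p, 0 ≤ f i p) (p : ℝ) : 0 ≤ marginal S f p :=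
  sum_nonneg fun i _ => mul_nonneg (S.lam_pos i).le (hf i p)

theorem marginal_pos (hf : ∀ i p, 0 ≤ f i p) {p : ℝ} (hp : p ∈ suppF f) : 0 < marginal S f p := by
  obtain ⟨i, -, hi⟩ := mem_biUnion.1 hp
  have hfi : 0 < f i p := (hf i p).lt_of_ne' (Finsupp.mem_support_iff.1 hi)
  exact sum_pos' (fun j _ => mul_nonneg (S.lam_pos j).le (hf j p))
    ⟨i, mem_univ i, mul_pos (S.lam_pos i) hfi⟩

theorem ECE_le_iff (hf : ∀ i p, 0 ≤ f i p) {t ε : ℝ} (ht : 0 < t) (hε : 0 ≤ ε) :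
    ECE S t f ≤ ε ↔ ∑ p ∈ suppF f, marginal S f p * |kappa S f p - p| ^ t ≤ ε ^ t := by
  have hsum : 0 ≤ ∑ p ∈ suppF f, marginal S f p * |kappa S f p - p| ^ t :=
    sum_nonneg fun p _ => mul_nonneg (marginal_nonneg hf p) (by positivity)
  rw [ECE, one_div, Real.rpow_inv_le_iff_of_pos hsum hε ht]

end Predictor

section GeneratedPredictor

/-- The predictor generated by `(g̃, χ)`, with `f_i` written as the combination of the rows
`χ(q, ·)` with coefficients `g̃_i(q) / g(q)`, so that finiteness of the support is built in. -/
def genPredictor (S : Setup n) (g : Fin n → ℝ →₀ ℝ) (χ : ℝ × ℝ →₀ ℝ) (i : Fin n) : ℝ →₀ ℝ :=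
  ∑ q ∈ suppF g, (g i q / marginal S g q) • χ.curry q

variable {S : Setup n} {g : Fin n → ℝ →₀ ℝ} {χ : ℝ × ℝ →₀ ℝ}

theorem genPredictor_apply (S : Setup n) (g : Fin n → ℝ →₀ ℝ) (χ : ℝ × ℝ →₀ ℝ) (i : Fin n)
    (p : ℝ) : genPredictor S g χ i p = genVal S g χ i p := by
  simp only [genPredictor, genVal, Finsupp.finsetSum_apply, Finsupp.smul_apply,
    Finsupp.curry_apply, smul_eq_mul]

theorem genPredictor_nonneg (hg : ∀ i q, 0 ≤ g i q) (hχ : ∀ x, 0 ≤ χ x) (i : Fin n) (p : ℝ) :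
    0 ≤ genPredictor S g χ i p := by
  rw [genPredictor_apply]
  exact sum_nonneg fun q _ =>
    mul_nonneg (div_nonneg (hg i q) (marginal_nonneg hg q)) (hχ (q, p))

theorem exists_mem_support_of_mem_support_genPredictor {i : Fin n} {p : ℝ}
    (hp : p ∈ (genPredictor S g χ i).support) : ∃ q, (q, p) ∈ χ.support := by
  rw [Finsupp.mem_support_iff, genPredictor_apply] at hp
  obtain ⟨q, -, hq⟩ := exists_ne_zero_of_sum_ne_zero hp
  exact ⟨q, Finsupp.mem_support_iff.2 (right_ne_zero_of_mul hq)⟩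

theorem degree_genPredictor (hg : ∀ i q, 0 ≤ g i q)
    (hmarg : ∀ q, planMargQ χ q = marginal S g q) (i : Fin n) :
    (genPredictor S g χ i).degree = (g i).degree := by
  calc (genPredictor S g χ i).degree
      = ∑ q ∈ suppF g, g i q / marginal S g q * planMargQ χ q := by
        simp only [genPredictor, map_sum, degree_smul, smul_eq_mul,
          planMargQ_eq_degree_curry]
    _ = ∑ q ∈ suppF g, g i q :=
        sum_congr rfl fun q hq => by rw [hmarg, div_mul_cancel₀ _ (marginal_pos hg hq).ne']
    _ = (g i).degree := (degree_eq_sum_of_support_subset (support_subset_suppF g i)).symm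

theorem isPredictor_genPredictor (hg : IsPredictor g) (hχ : IsPlan χ)
    (hmarg : ∀ q, planMargQ χ q = marginal S g q) : IsPredictor (genPredictor S g χ) := by
  intro i
  refine ⟨genPredictor_nonneg (fun i => (hg i).1) hχ.1 i, fun p hp => ?_, ?_⟩
  · obtain ⟨q, hqp⟩ := exists_mem_support_of_mem_support_genPredictor hp
    exact (hχ.2.1 (q, p) hqp).2
  · exact (degree_genPredictor (fun i => (hg i).1) hmarg i).trans (hg i).2.2

theorem sum_lam_mul_genPredictor_mul (S : Setup n) (g : Fin n → ℝ →₀ ℝ) (χ : ℝ × ℝ →₀ ℝ)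
    (p : ℝ) (c : Fin n → ℝ) :
    ∑ i, S.lam i * genPredictor S g χ i p * c i =
      ∑ q ∈ suppF g, χ (q, p) * ((∑ i, S.lam i * g i q * c i) / marginal S g q) := by
  simp only [genPredictor_apply, genVal, mul_sum, sum_mul, sum_div]
  rw [sum_comm]
  exact sum_congr rfl fun q _ => sum_congr rfl fun i _ => by ring

theorem marginal_genPredictor (hg : ∀ i q, 0 ≤ g i q) (p : ℝ) :
    marginal S (genPredictor S g χ) p = ∑ q ∈ suppF g, χ (q, p) := by
  calc marginal S (genPredictor S g χ) p
      = ∑ q ∈ suppF g, χ (q, p) * (marginal S g q / marginal S g q) := by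
        simpa only [Pi.one_apply, mul_one] using! sum_lam_mul_genPredictor_mul S g χ p 1
    _ = ∑ q ∈ suppF g, χ (q, p) :=
        sum_congr rfl fun q hq => by rw [div_self (marginal_pos hg hq).ne', mul_one]

theorem kappa_genPredictor (hg : ∀ i q, 0 ≤ g i q) (hcal : PerfectlyCalibrated S g) (p : ℝ) :
    kappa S (genPredictor S g χ) p = (suppF g).centerMass (fun q => χ (q, p)) id := by
  have hnum : ∑ i, S.lam i * genPredictor S g χ i p * S.theta i =
      ∑ q ∈ suppF g, χ (q, p) * q :=
    (sum_lam_mul_genPredictor_mul S g χ p S.theta).trans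
      (sum_congr rfl fun q hq => congrArg (χ (q, p) * ·) (hcal q hq))
  rw [kappa, hnum, marginal_genPredictor hg, div_eq_inv_mul]
  rfl

theorem marginal_mul_abs_kappa_sub_rpow_genPredictor_le (hg : ∀ i q, 0 ≤ g i q)
    (hcal : PerfectlyCalibrated S g) (hχ : ∀ x, 0 ≤ χ x) {t : ℝ} (ht : 1 ≤ t) (p : ℝ) :
    marginal S (genPredictor S g χ) p * |kappa S (genPredictor S g χ) p - p| ^ t ≤
      ∑ q ∈ suppF g, χ (q, p) * |q - p| ^ t := by
  rw [marginal_genPredictor hg, kappa_genPredictor hg hcal]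
  exact sum_smul_map_centerMass_le (convexOn_dist_rpow convex_univ p ht)
    (fun q _ => hχ (q, p)) fun q _ => Set.mem_univ q

theorem sum_mul_abs_sub_rpow_le_planCost (hχ : ∀ x, 0 ≤ χ x) (t : ℝ) (s : Finset (ℝ × ℝ)) :
    ∑ x ∈ s, χ x * |x.1 - x.2| ^ t ≤ planCost t χ := by
  calc ∑ x ∈ s, χ x * |x.1 - x.2| ^ t
      ≤ ∑ x ∈ s ∪ χ.support, χ x * |x.1 - x.2| ^ t :=
        sum_le_sum_of_subset_of_nonneg subset_union_left fun x _ _ =>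
          mul_nonneg (hχ x) (by positivity)
    _ = planCost t χ :=
        (sum_subset subset_union_right fun x _ hx => by
          rw [Finsupp.notMem_support_iff.1 hx, zero_mul]).symm

theorem sum_marginal_mul_abs_kappa_sub_rpow_genPredictor_le_planCost (hg : ∀ i q, 0 ≤ g i q)
    (hcal : PerfectlyCalibrated S g) (hχ : ∀ x, 0 ≤ χ x) {t : ℝ} (ht : 1 ≤ t) :
    ∑ p ∈ suppF (genPredictor S g χ),
      marginal S (genPredictor S g χ) p * |kappa S (genPredictor S g χ) p - p| ^ t ≤
        planCost t χ := by
  set f := genPredictor S g χ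
  calc ∑ p ∈ suppF f, marginal S f p * |kappa S f p - p| ^ t
      ≤ ∑ p ∈ suppF f, ∑ q ∈ suppF g, χ (q, p) * |q - p| ^ t :=
        sum_le_sum fun p _ => marginal_mul_abs_kappa_sub_rpow_genPredictor_le hg hcal hχ ht p
    _ = ∑ x ∈ suppF g ×ˢ suppF f, χ x * |x.1 - x.2| ^ t := by rw [sum_product_right]
    _ ≤ planCost t χ := sum_mul_abs_sub_rpow_le_planCost hχ t _

end GeneratedPredictor

/-- The predictor generated by a perfectly calibrated predictor `g̃`
and a feasible post-processing plan `χ` is a well-defined predictor and is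
`(ε, ℓ_t)`-calibrated. -/
theorem statement0 {n : ℕ} (S : Setup n) (t ε : ℝ) (ht : 1 ≤ t) (hε : 0 ≤ ε)
    (g : Fin n → ℝ →₀ ℝ) (hg : IsPredictor g) (hgcal : PerfectlyCalibrated S g)
    (χ : ℝ × ℝ →₀ ℝ) (hχ : IsPlan χ) (hfeas : FeasiblePlan S t ε g χ) :
    ∃ f : Fin n → ℝ →₀ ℝ,
      (∀ i p, f i p = genVal S g χ i p) ∧ IsPredictor f ∧ ECE S t f ≤ ε := by
  have hg_nonneg : ∀ i q, 0 ≤ g i q := fun i => (hg i).1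
  have hf_nonneg := genPredictor_nonneg (S := S) hg_nonneg hχ.1
  refine ⟨genPredictor S g χ, genPredictor_apply S g χ,
    isPredictor_genPredictor hg hχ hfeas.2, ?_⟩
  exact (ECE_le_iff hf_nonneg (by linarith) hε).2
    ((sum_marginal_mul_abs_kappa_sub_rpow_genPredictor_le_planCost hg_nonneg hgcal hχ.1 ht).trans
      hfeas.1)

end PersuasiveCalibration
end
end

section
/- A finitely supported probability distribution g on [0,1] is a marginalized perfectly calibrated predictor (i.e., g(q) = Σ_i λ_i·g̃_i(q) for some perfectly calibrated predictor g̃) if and only if g is a mean-preserving contraction of the distribution on [0,1] placing mass λ_i at θ_i, i.e., g ∈ MPC(λ). -/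
open Finset

noncomputable section

namespace PersuasiveCalibration

variable {n : ℕ}

variable {A σT : Type*}

/-!
On `ℝ`, a convex function agrees on any finite set with an affine function plus a nonnegative
combination of hinges `t ↦ max (u - t) 0`. As the integral of a CDF up to `s` is the mean of the
hinge with kink `s`, being a mean-preserving contraction of the prior is the same as being below it
in the convex order. By Strassen's theorem this in turn amounts to the existence of a martingale
coupling: Jensen's inequality gives one direction, and for the other a functional separating the
pair of distributions from the polytope of couplings would produce a violating maximum of finitely
many affine functions. Finally, a coupling `P` of the prior and `g` in which `q` is the mean of `θ`
given `q` is the same as a perfectly calibrated predictor `g̃` with marginal `g`, through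
`P i q = λ i * g̃ i q`.
-/

section ConvexOrder

variable {ι κ E : Type*} [Fintype ι] [Fintype κ] [AddCommGroup E] [Module ℝ E]
  {b : κ → ℝ} {x : κ → E} {a : ι → ℝ} {θ : ι → E}

/-- The convex order: the distribution with mass `b k` at `x k` gives every convex function at most
the integral given by the distribution with mass `a i` at `θ i`. Atoms are indexed, so that
coincident points need not be merged. -/
def ConvexLE (b : κ → ℝ) (x : κ → E) (a : ι → ℝ) (θ : ι → E) : Prop :=
  ∀ c : E → ℝ, ConvexOn ℝ Set.univ c → ∑ k, b k * c (x k) ≤ ∑ i, a i * c (θ i)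

/-- `P` is a coupling of the distribution with mass `a i` at `θ i` and the one with mass `b k` at
`x k` under which the conditional mean of `θ` given `k` is `x k`. The condition on the mean is
multiplied by `b k` to avoid a division. -/
structure IsMartingaleCoupling (P : ι → κ → ℝ) (b : κ → ℝ) (x : κ → E) (a : ι → ℝ)
    (θ : ι → E) : Prop where
  nonneg : ∀ i k, 0 ≤ P i k
  sum_snd : ∀ i, ∑ k, P i k = a i
  sum_fst : ∀ k, ∑ i, P i k = b k
  barycenter : ∀ k, ∑ i, P i k • θ i = b k • x k

theorem sum_mul_map_le_of_sum_smul_eq {c : E → ℝ} (hc : ConvexOn ℝ Set.univ c) {w : ι → ℝ}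
    (hw : ∀ i, 0 ≤ w i) {y : E} (hy : ∑ i, w i • θ i = (∑ i, w i) • y) :
    (∑ i, w i) * c y ≤ ∑ i, w i * c (θ i) := by
  rcases (sum_nonneg fun i _ => hw i).eq_or_lt with hzero | hpos
  · have hw0 : ∀ i, w i = 0 := fun i =>
      (sum_eq_zero_iff_of_nonneg fun i _ => hw i).1 hzero.symm i (mem_univ i)
    simp [hw0]
  · have hcenter : univ.centerMass w θ = y := by
      rw [centerMass, hy, inv_smul_smul₀ hpos.ne']
    have hjensen := hc.map_centerMass_le (fun i _ => hw i) hpos fun i _ => Set.mem_univ (θ i)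
    rwa [hcenter, centerMass, smul_eq_mul, le_inv_mul_iff₀ hpos] at hjensen

theorem IsMartingaleCoupling.convexLE {P : ι → κ → ℝ} (hP : IsMartingaleCoupling P b x a θ) :
    ConvexLE b x a θ := fun c hc => calc
  ∑ k, b k * c (x k) ≤ ∑ k, ∑ i, P i k * c (θ i) := sum_le_sum fun k _ => by
    rw [← hP.sum_fst k]
    exact sum_mul_map_le_of_sum_smul_eq hc (fun i => hP.nonneg i k)
      (by rw [hP.barycenter, hP.sum_fst])
  _ = ∑ i, a i * c (θ i) := by
    rw [sum_comm]
    simp only [← sum_mul, hP.sum_snd]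

theorem ConvexLE.sum_eq (h : ConvexLE b x a θ) : ∑ k, b k = ∑ i, a i := by
  have hle := h _ (convexOn_const 1 convex_univ)
  have hge := h _ (convexOn_const (-1) convex_univ)
  simp only [mul_neg, mul_one, sum_neg_distrib] at hle hge
  linarith

end ConvexOrder

section CouplingVector

variable {ι κ E : Type*} [Fintype ι] [Fintype κ] [DecidableEq ι] [DecidableEq κ]
  [AddCommGroup E] [Module ℝ E]

/-- The first marginal of the point mass at `(i, k)`, together with the mass and the unnormalized
mean of `θ` that it assigns to every `k'`. The marginals and barycenters of a coupling are the
corresponding combination of these vectors. -/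
def couplingVector (θ : ι → E) (t : ι × κ) : (ι → ℝ) × (κ → ℝ × E) :=
  (Pi.single t.1 1, Pi.single t.2 (1, θ t.1))

theorem sum_smul_couplingVector (θ : ι → E) (w : ι × κ → ℝ) :
    ∑ t, w t • couplingVector θ t =
      (fun i => ∑ k, w (i, k), fun k => (∑ i, w (i, k), ∑ i, w (i, k) • θ i)) := by
  ext j <;>
    simp [couplingVector, Fintype.sum_prod_type, Prod.fst_sum, Prod.snd_sum, Pi.single_apply]

theorem map_prod_pi_eq_sum (f : (ι → ℝ) × (κ → ℝ × E) →ₗ[ℝ] ℝ) (a : ι → ℝ) (b : κ → ℝ)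
    (x : κ → E) :
    f (a, fun k => (b k, b k • x k)) =
      ∑ i, a i * f (Pi.single i 1, 0) + ∑ k, b k * f (0, Pi.single k (1, x k)) := by
  have hdecomp : (a, fun k => (b k, b k • x k)) =
      ∑ i, a i • ((Pi.single i 1, 0) : (ι → ℝ) × (κ → ℝ × E)) +
        ∑ k, b k • ((0, Pi.single k (1, x k)) : (ι → ℝ) × (κ → ℝ × E)) := by
    ext j <;> simp [Prod.fst_sum, Prod.snd_sum, Pi.single_apply]
  simp only [hdecomp, map_add, map_sum, map_smul, smul_eq_mul]

end CouplingVector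

theorem convexOn_map_one_prod {E : Type*} [AddCommGroup E] [Module ℝ E] (f : ℝ × E →ₗ[ℝ] ℝ) :
    ConvexOn ℝ Set.univ fun y => f (1, y) := by
  refine ⟨convex_univ, fun y _ z _ p q _ _ hpq => le_of_eq ?_⟩
  rw [← map_smul, ← map_smul, ← map_add]
  simp [hpq]

section Strassen

variable {ι κ E : Type*} [Fintype ι] [Fintype κ] [AddCommGroup E] [Module ℝ E]
  [TopologicalSpace E] [IsTopologicalAddGroup E] [ContinuousSMul ℝ E] [LocallyConvexSpace ℝ E]
  [T2Space E] {b : κ → ℝ} {x : κ → E} {a : ι → ℝ} {θ : ι → E}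

theorem exists_mem_stdSimplex_sum_smul_eq {v : ι → E} {y : E}
    (h : ∀ (f : E →L[ℝ] ℝ) (u : ℝ), (∀ i, f (v i) ≤ u) → f y ≤ u) :
    ∃ w ∈ stdSimplex ℝ ι, ∑ i, w i • v i = y := by
  classical
  by_contra hy
  let L := Fintype.linearCombination ℝ v
  have hmem : y ∉ L '' stdSimplex ℝ ι := hy
  have hclosed : IsClosed (L '' stdSimplex ℝ ι) :=
    ((isCompact_stdSimplex ℝ ι).image L.continuous_of_finiteDimensional).isClosed
  obtain ⟨f, u, hlt, hu⟩ := geometric_hahn_banach_closed_point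
    ((convex_stdSimplex ℝ ι).linear_image L) hclosed hmem
  refine (h f u fun i => ?_).not_gt hu
  exact (hlt (v i) ⟨_, single_mem_stdSimplex ℝ i, by simp [L]⟩).le

theorem ConvexLE.exists_isMartingaleCoupling (h : ConvexLE b x a θ) (ha : ∀ i, 0 ≤ a i)
    (ha1 : ∑ i, a i = 1) (hb : ∀ k, 0 ≤ b k) : ∃ P, IsMartingaleCoupling P b x a θ := by
  classical
  have hκ : (univ : Finset κ).Nonempty :=
    nonempty_of_sum_ne_zero (f := b) (by simp [h.sum_eq, ha1])
  have hsep : ∀ (f : (ι → ℝ) × (κ → ℝ × E) →L[ℝ] ℝ) (u : ℝ),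
      (∀ t, f (couplingVector θ t) ≤ u) → f (a, fun k => (b k, b k • x k)) ≤ u := by
    intro f u hu
    let φ : ι → ℝ := fun i => f (Pi.single i 1, 0)
    let η : κ → E → ℝ := fun k y => f (0, Pi.single k (1, y))
    let c : E → ℝ := univ.sup' hκ η
    have hc : ConvexOn ℝ Set.univ c :=
      sup'_induction hκ η (fun _ h₁ _ h₂ => h₁.sup h₂) fun k _ =>
        convexOn_map_one_prod (f.toLinearMap ∘ₗ LinearMap.inr ℝ (ι → ℝ) (κ → ℝ × E) ∘ₗ
          LinearMap.single ℝ (fun _ => ℝ × E) k)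
    have hη : ∀ k, η k (x k) ≤ c (x k) := fun k => le_sup' η (mem_univ k) (x k)
    have hcθ : ∀ i, c (θ i) ≤ u - φ i := by
      intro i
      refine (Finset.sup'_apply hκ η (θ i)).trans_le (sup'_le _ _ fun k _ => ?_)
      have hsplit : f (couplingVector θ (i, k)) = φ i + η k (θ i) := by
        simp [couplingVector, φ, η, ← map_add]
      linarith [hu (i, k)]
    calc f (a, fun k => (b k, b k • x k))
      _ = ∑ i, a i * φ i + ∑ k, b k * η k (x k) := map_prod_pi_eq_sum f.toLinearMap a b x
      _ ≤ ∑ i, a i * φ i + ∑ k, b k * c (x k) := by gcongr with k; exacts [hb k, hη k]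
      _ ≤ ∑ i, a i * φ i + ∑ i, a i * c (θ i) := by gcongr; exact h c hc
      _ ≤ ∑ i, a i * φ i + ∑ i, a i * (u - φ i) := by gcongr with i; exacts [ha i, hcθ i]
      _ = u := by simp only [mul_sub, sum_sub_distrib, ← sum_mul, ha1]; ring
  obtain ⟨w, hw, hsum⟩ := exists_mem_stdSimplex_sum_smul_eq hsep
  simp only [sum_smul_couplingVector, Prod.mk.injEq, funext_iff] at hsum
  exact ⟨fun i k => w (i, k), fun i k => hw.1 (i, k), hsum.1, fun k => (hsum.2 k).1,
    fun k => (hsum.2 k).2⟩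

theorem convexLE_iff_exists_isMartingaleCoupling (ha : ∀ i, 0 ≤ a i) (ha1 : ∑ i, a i = 1)
    (hb : ∀ k, 0 ≤ b k) : ConvexLE b x a θ ↔ ∃ P, IsMartingaleCoupling P b x a θ :=
  ⟨fun h => h.exists_isMartingaleCoupling ha ha1 hb, fun ⟨_, hP⟩ => hP.convexLE⟩

end Strassen

section Hinge

theorem secant_le_of_le_left {c : ℝ → ℝ} (hc : ConvexOn ℝ Set.univ c) {t y z : ℝ} (htz : t ≤ z)
    (hzy : z < y) : c z + (c y - c z) / (y - z) * (t - z) ≤ c t := by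
  rcases htz.eq_or_lt with rfl | htz
  · simp
  · have hslope := hc.slope_mono_adjacent (Set.mem_univ t) (Set.mem_univ y) htz hzy
    rw [div_le_iff₀ (sub_pos.2 htz)] at hslope
    linarith

theorem convexOn_sub_affine {c : ℝ → ℝ} (hc : ConvexOn ℝ Set.univ c) (m z : ℝ) :
    ConvexOn ℝ Set.univ fun t => c t - (c z + m * (t - z)) := by
  have haffine := ((LinearMap.mulLeft ℝ (-m)).convexOn convex_univ).add_const (m * z - c z)
  refine (hc.add haffine).congr fun t _ => ?_
  simp only [Pi.add_apply, LinearMap.mulLeft_apply]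
  ring

-- Peeling off the largest point `y` leaves `c` minus its secant through `y` and the next point
-- `z`, which is again convex, vanishes at `z` and is nonnegative to the left of `z`.
theorem exists_eq_sum_hinge_of_vanish_at_max {c : ℝ → ℝ} (hc : ConvexOn ℝ Set.univ c)
    {T : Finset ℝ} {y : ℝ} (hT : ∀ t ∈ T, t < y) (hy : c y = 0) (hnonneg : ∀ t ∈ T, 0 ≤ c t) :
    ∃ w : ℝ → ℝ, (∀ u, 0 ≤ w u) ∧
      ∀ t ∈ insert y T, c t = ∑ u ∈ insert y T, w u * max (u - t) 0 := by
  induction T using Finset.induction_on_max generalizing c y with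
  | empty => exact ⟨0, by simp, by simp [hy]⟩
  | insert z T hz ih =>
    have hzy : z < y := hT z (mem_insert_self z T)
    let m := (c y - c z) / (y - z)
    have hm : m * (y - z) = c y - c z := div_mul_cancel₀ _ (sub_pos.2 hzy).ne'
    have hm0 : m ≤ 0 := div_nonpos_of_nonpos_of_nonneg
      (by linarith [hnonneg z (mem_insert_self z T)]) (sub_pos.2 hzy).le
    obtain ⟨w, hw, hrep⟩ := ih (convexOn_sub_affine hc m z) hz (by simp)
      fun t ht => sub_nonneg.2 (secant_le_of_le_left hc (hz t ht).le hzy)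
    refine ⟨Function.update w y (-m), fun u => ?_, fun t ht => ?_⟩
    · rcases eq_or_ne u y with rfl | huy <;> simp [*]
    · have hynot : y ∉ insert z T := fun h => (hT y h).false
      have hrest : ∑ u ∈ insert z T, Function.update w y (-m) u * max (u - t) 0 =
          ∑ u ∈ insert z T, w u * max (u - t) 0 :=
        sum_congr rfl fun u hu => by rw [Function.update_of_ne (ne_of_mem_of_not_mem hu hynot)]
      rw [sum_insert hynot, hrest, Function.update_self]
      rcases mem_insert.1 ht with rfl | ht
      · have hvanish : ∀ u ∈ insert z T, w u * max (u - t) 0 = 0 := fun u hu => by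
          rw [max_eq_right (by linarith [hT u hu]), mul_zero]
        simp [sum_eq_zero hvanish, hy]
      · rw [← hrep t ht, max_eq_left (by linarith [hT t ht])]
        linarith

theorem exists_eq_affine_add_sum_hinge {c : ℝ → ℝ} (hc : ConvexOn ℝ Set.univ c) (T : Finset ℝ) :
    ∃ (α β : ℝ) (w : ℝ → ℝ), (∀ u, 0 ≤ w u) ∧
      ∀ t ∈ T, c t = α + β * t + ∑ u ∈ T, w u * max (u - t) 0 := by
  rcases T.eq_empty_or_nonempty with rfl | hne
  · exact ⟨0, 0, 0, by simp, by simp⟩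
  let z := T.max' hne
  let m := (c (z + 1) - c z) / (z + 1 - z)
  have hlt : ∀ t ∈ T.erase z, t < z := fun t ht => T.lt_max'_of_mem_erase_max' hne ht
  obtain ⟨w, hw, hrep⟩ := exists_eq_sum_hinge_of_vanish_at_max (convexOn_sub_affine hc m z) hlt
    (by simp) fun t ht => sub_nonneg.2 (secant_le_of_le_left hc (hlt t ht).le (lt_add_one z))
  rw [insert_erase (T.max'_mem hne)] at hrep
  refine ⟨c z - m * z, m, w, hw, fun t ht => ?_⟩
  linarith [hrep t ht]

variable {ι κ : Type*} [Fintype ι] [Fintype κ] {b x : κ → ℝ} {a θ : ι → ℝ}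

theorem sum_mul_eq_of_eq_affine_add_sum_hinge {c w : ℝ → ℝ} {α β : ℝ} {T : Finset ℝ}
    (hc : ∀ t ∈ T, c t = α + β * t + ∑ u ∈ T, w u * max (u - t) 0) (hθ : ∀ i, θ i ∈ T) :
    ∑ i, a i * c (θ i) = α * ∑ i, a i + β * ∑ i, a i * θ i +
      ∑ u ∈ T, w u * ∑ i, a i * max (u - θ i) 0 := by
  simp only [hc _ (hθ _), mul_sum, mul_add, sum_add_distrib]
  rw [sum_comm (s := T)]
  simp only [mul_left_comm, mul_comm]

theorem ConvexLE.of_hinge_le (hmass : ∑ k, b k = ∑ i, a i)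
    (hmean : ∑ k, b k * x k = ∑ i, a i * θ i) {T : Finset ℝ} (hx : ∀ k, x k ∈ T)
    (hθ : ∀ i, θ i ∈ T)
    (hhinge : ∀ u ∈ T, ∑ k, b k * max (u - x k) 0 ≤ ∑ i, a i * max (u - θ i) 0) :
    ConvexLE b x a θ := by
  intro c hc
  obtain ⟨α, β, w, hw, hrep⟩ := exists_eq_affine_add_sum_hinge hc T
  rw [sum_mul_eq_of_eq_affine_add_sum_hinge hrep hx, hmass, hmean,
    sum_mul_eq_of_eq_affine_add_sum_hinge hrep hθ]
  gcongr with u hu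
  exacts [hw u, hhinge u hu]

theorem ConvexLE.sum_mul_eq (h : ConvexLE b x a θ) : ∑ k, b k * x k = ∑ i, a i * θ i := by
  have hle := h _ (LinearMap.id.convexOn convex_univ)
  have hge := h _ ((-LinearMap.id).convexOn convex_univ)
  simp only [LinearMap.neg_apply, LinearMap.id_apply, mul_neg, sum_neg_distrib] at hle hge
  linarith

theorem convexOn_hinge (u : ℝ) : ConvexOn ℝ Set.univ fun t : ℝ => max (u - t) 0 :=
  ((convexOn_const u convex_univ).sub (concaveOn_id convex_univ)).sup
    (convexOn_const 0 convex_univ)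

theorem convexLE_iff_hinge_le {s : Set ℝ} (hx : ∀ k, x k ∈ s) (hθ : ∀ i, θ i ∈ s) :
    ConvexLE b x a θ ↔ ∑ k, b k = ∑ i, a i ∧ ∑ k, b k * x k = ∑ i, a i * θ i ∧
      ∀ u ∈ s, ∑ k, b k * max (u - x k) 0 ≤ ∑ i, a i * max (u - θ i) 0 := by
  refine ⟨fun h => ⟨h.sum_eq, h.sum_mul_eq, fun u _ => h _ (convexOn_hinge u)⟩, ?_⟩
  rintro ⟨hmass, hmean, hhinge⟩
  refine ConvexLE.of_hinge_le hmass hmean (T := univ.image x ∪ univ.image θ) (by simp) (by simp)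
    fun u hu => hhinge u ?_
  rcases mem_union.1 hu with hu | hu <;> obtain ⟨j, -, rfl⟩ := mem_image.1 hu
  exacts [hx j, hθ j]

end Hinge

section IntegralOfCdf

open MeasureTheory

theorem integral_ite_le_eq_max {p q s : ℝ} (hq : p ≤ q) (hs : p ≤ s) :
    ∫ t in p..s, (if q ≤ t then (1 : ℝ) else 0) = max (s - q) 0 := by
  have hindicator : (fun t => if q ≤ t then (1 : ℝ) else 0) = (Set.Ici q).indicator 1 := by
    ext t
    simp [Set.indicator_apply]
  have hae : (Set.Ici q ∩ Set.Ioc p s : Set ℝ) =ᵐ[volume] (Set.Ioi q ∩ Set.Ioc p s : Set ℝ) :=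
    ae_eq_set_inter Ioi_ae_eq_Ici.symm Filter.EventuallyEq.rfl
  have hinter : Set.Ioi q ∩ Set.Ioc p s = Set.Ioc q s := by
    grind
  rw [intervalIntegral.integral_of_le hs, hindicator, integral_indicator_one measurableSet_Ici,
    measureReal_restrict_apply measurableSet_Ici, measureReal_congr hae, hinter,
    Real.volume_real_Ioc]

theorem integral_sum_filter_le {ι : Type*} (T : Finset ι) (w y : ι → ℝ) {p s : ℝ}
    (hy : ∀ i ∈ T, p ≤ y i) (hs : p ≤ s) :
    ∫ t in p..s, ∑ i ∈ T with y i ≤ t, w i = ∑ i ∈ T, w i * max (s - y i) 0 := by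
  have hstep : ∀ i, Monotone fun t => if y i ≤ t then (1 : ℝ) else 0 := fun i t t' htt' => by
    dsimp only
    split_ifs <;> linarith
  calc ∫ t in p..s, ∑ i ∈ T with y i ≤ t, w i
    _ = ∫ t in p..s, ∑ i ∈ T, w i * (if y i ≤ t then (1 : ℝ) else 0) := by
      simp only [sum_filter, mul_ite, mul_one, mul_zero]
    _ = ∑ i ∈ T, w i * ∫ t in p..s, (if y i ≤ t then (1 : ℝ) else 0) := by
      rw [intervalIntegral.integral_finsetSum fun i _ =>
        (hstep i).intervalIntegrable.const_mul (w i)]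
      simp only [intervalIntegral.integral_const_mul]
    _ = ∑ i ∈ T, w i * max (s - y i) 0 :=
      sum_congr rfl fun i hi => by rw [integral_ite_le_eq_max (hy i hi) hs]

end IntegralOfCdf

section Calibration

variable {S : Setup n} {f : Fin n → ℝ →₀ ℝ} {g : ℝ →₀ ℝ}

theorem integral_cdf (hg : IsDist g) {s : ℝ} (hs : 0 ≤ s) :
    ∫ t in (0 : ℝ)..s, cdf g t = ∑ q : g.support, g q * max (s - q) 0 := by
  rw [sum_coe_sort g.support fun q => g q * max (s - q) 0]
  exact integral_sum_filter_le g.support g id (fun q hq => (hg.2.1 q hq).1) hs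

theorem integral_priorCdf (S : Setup n) {s : ℝ} (hs : 0 ≤ s) :
    ∫ t in (0 : ℝ)..s, priorCdf S t = ∑ i, S.lam i * max (s - S.theta i) 0 :=
  integral_sum_filter_le univ S.lam S.theta (fun i _ => (S.theta_mem i).1) hs

theorem sum_mul_max_eq_of_forall_le {ι : Type*} [Fintype ι] (w : ι → ℝ) {y : ι → ℝ} {s : ℝ}
    (hy : ∀ i, y i ≤ s) : ∑ i, w i * max (s - y i) 0 = (∑ i, w i) * s - ∑ i, w i * y i := by
  simp only [max_eq_left (sub_nonneg.2 (hy _)), mul_sub, sum_sub_distrib, sum_mul]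

theorem mpcPrior_iff_convexLE (hg : IsDist g) :
    MPCprior S g ↔ ConvexLE (fun q : g.support => g q) (fun q => (q : ℝ)) S.lam S.theta := by
  have hmem : ∀ q : g.support, (q : ℝ) ∈ Set.Icc (0 : ℝ) 1 := fun q => hg.2.1 q q.2
  have hmass : ∑ q : g.support, g q = ∑ i, S.lam i := by
    rw [sum_coe_sort g.support g, hg.2.2, S.lam_sum]
  rw [convexLE_iff_hinge_le hmem S.theta_mem, MPCprior, integral_cdf hg zero_le_one,
    integral_priorCdf S zero_le_one, sum_mul_max_eq_of_forall_le _ fun q => (hmem q).2,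
    sum_mul_max_eq_of_forall_le _ fun i => (S.theta_mem i).2, hmass, sub_right_inj, and_comm]
  simp only [true_and]
  refine and_congr_right' (forall₂_congr fun s hs => ?_)
  rw [integral_cdf hg hs.1, integral_priorCdf S hs.1]

theorem mem_suppF_iff_marginal_ne_zero (S : Setup n) (hf : IsPredictor f) {q : ℝ} :
    q ∈ suppF f ↔ marginal S f q ≠ 0 := by
  have hnonneg : ∀ i ∈ univ, 0 ≤ S.lam i * f i q := fun i _ =>
    mul_nonneg (S.lam_pos i).le ((hf i).1 q)
  rw [marginal, Ne, sum_eq_zero_iff_of_nonneg hnonneg]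
  simp [suppF, (S.lam_pos _).ne']

theorem perfectlyCalibrated_iff (hf : IsPredictor f) :
    PerfectlyCalibrated S f ↔
      ∀ q ∈ suppF f, ∑ i, S.lam i * f i q * S.theta i = marginal S f q * q :=
  forall₂_congr fun q hq => by
    rw [kappa, div_eq_iff ((mem_suppF_iff_marginal_ne_zero S hf).1 hq), mul_comm q]

theorem isMartingaleCoupling_of_perfectlyCalibrated (hf : IsPredictor f)
    (hcal : PerfectlyCalibrated S f) (hmarg : ∀ q, g q = marginal S f q) :
    IsMartingaleCoupling (fun i (q : g.support) => S.lam i * f i q) (fun q => g q)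
      (fun q => (q : ℝ)) S.lam S.theta := by
  have hsupp : suppF f = g.support := by
    ext q
    rw [mem_suppF_iff_marginal_ne_zero S hf, ← hmarg, Finsupp.mem_support_iff]
  refine ⟨fun i q => mul_nonneg (S.lam_pos i).le ((hf i).1 q), fun i => ?_, fun q => (hmarg q).symm,
    fun q => ?_⟩
  · have hsub : (f i).support ⊆ g.support :=
      hsupp ▸ subset_biUnion_of_mem (fun i => (f i).support) (mem_univ i)
    have hsum : ∑ q ∈ g.support, f i q = 1 :=
      (sum_subset hsub fun q _ => Finsupp.notMem_support_iff.1).symm.trans (hf i).2.2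
    rw [← mul_sum, sum_coe_sort g.support (f i), hsum, mul_one]
  · simp only [smul_eq_mul]
    rw [(perfectlyCalibrated_iff hf).1 hcal q (hsupp.symm ▸ q.2), hmarg]

/-- The predictor `i ↦ P i q / λ i` obtained from a coupling `P` of the prior and `g` by
conditioning on the event `i`. -/
def conditionalPredictor (S : Setup n) (P : Fin n → g.support → ℝ) (i : Fin n) : ℝ →₀ ℝ :=
  Finsupp.indicator g.support fun q hq => P i ⟨q, hq⟩ / S.lam i

theorem lam_mul_conditionalPredictor (P : Fin n → g.support → ℝ) (i : Fin n) (q : g.support) :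
    S.lam i * conditionalPredictor S P i q = P i q := by
  rw [conditionalPredictor, Finsupp.indicator_of_mem q.2, mul_div_cancel₀ _ (S.lam_pos i).ne']

theorem support_conditionalPredictor_subset (P : Fin n → g.support → ℝ) (i : Fin n) :
    (conditionalPredictor S P i).support ⊆ g.support :=
  Finsupp.support_indicator_subset _ _

theorem isPredictor_conditionalPredictor (hg : IsDist g) {P : Fin n → g.support → ℝ}
    (hnonneg : ∀ i q, 0 ≤ P i q) (hsum : ∀ i, ∑ q, P i q = S.lam i) :
    IsPredictor (conditionalPredictor S P) := by
  refine fun i => ⟨fun q => ?_, fun q hq => hg.2.1 q (support_conditionalPredictor_subset P i hq),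
    ?_⟩
  · by_cases hq : q ∈ g.support
    · rw [conditionalPredictor, Finsupp.indicator_of_mem hq]
      exact div_nonneg (hnonneg i _) (S.lam_pos i).le
    · rw [conditionalPredictor, Finsupp.indicator_of_notMem hq]
  · rw [sum_subset (support_conditionalPredictor_subset P i)
      fun q _ => Finsupp.notMem_support_iff.1, ← sum_coe_sort]
    refine mul_left_cancel₀ (S.lam_pos i).ne' ?_
    simp only [mul_sum, lam_mul_conditionalPredictor, hsum, mul_one]

theorem marginal_conditionalPredictor {P : Fin n → g.support → ℝ}
    (hsum : ∀ q, ∑ i, P i q = g q) (q : ℝ) : marginal S (conditionalPredictor S P) q = g q := by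
  by_cases hq : q ∈ g.support
  · exact (sum_congr rfl fun i _ => lam_mul_conditionalPredictor P i ⟨q, hq⟩).trans (hsum ⟨q, hq⟩)
  · simp [marginal, conditionalPredictor, Finsupp.indicator_of_notMem hq,
      Finsupp.notMem_support_iff.1 hq]

theorem IsMartingaleCoupling.perfectlyCalibrated (hg : IsDist g) {P : Fin n → g.support → ℝ}
    (hP : IsMartingaleCoupling P (fun q => g q) (fun q => (q : ℝ)) S.lam S.theta) :
    PerfectlyCalibrated S (conditionalPredictor S P) := by
  refine (perfectlyCalibrated_iff (isPredictor_conditionalPredictor hg hP.nonneg hP.sum_snd)).2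
    fun q hq => ?_
  obtain ⟨i, -, hi⟩ := mem_biUnion.1 hq
  have hqg := support_conditionalPredictor_subset P i hi
  rw [marginal_conditionalPredictor hP.sum_fst]
  simpa only [lam_mul_conditionalPredictor P _ ⟨q, hqg⟩, smul_eq_mul] using hP.barycenter ⟨q, hqg⟩

theorem exists_perfectlyCalibrated_iff_exists_isMartingaleCoupling (hg : IsDist g) :
    (∃ f : Fin n → ℝ →₀ ℝ, IsPredictor f ∧ PerfectlyCalibrated S f ∧
        ∀ q, g q = marginal S f q) ↔
      ∃ P, IsMartingaleCoupling P (fun q : g.support => g q) (fun q => (q : ℝ)) S.lam S.theta :=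
  ⟨fun ⟨_, hf, hcal, hmarg⟩ => ⟨_, isMartingaleCoupling_of_perfectlyCalibrated hf hcal hmarg⟩,
    fun ⟨P, hP⟩ => ⟨conditionalPredictor S P,
      isPredictor_conditionalPredictor hg hP.nonneg hP.sum_snd, hP.perfectlyCalibrated hg,
      fun q => (marginal_conditionalPredictor hP.sum_fst q).symm⟩⟩

end Calibration

/-- A finitely supported distribution `g` on `[0,1]` is the marginal of
some perfectly calibrated predictor iff it is a mean-preserving contraction of the
distribution placing mass `λ_i` at `θ_i`. -/
theorem statement3 {n : ℕ} (S : Setup n) (g : ℝ →₀ ℝ) (hg : IsDist g) :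
    (∃ gt : Fin n → ℝ →₀ ℝ, IsPredictor gt ∧ PerfectlyCalibrated S gt ∧
        ∀ q, g q = ∑ i, S.lam i * gt i q) ↔ MPCprior S g := by
  rw [mpcPrior_iff_convexLE hg, convexLE_iff_exists_isMartingaleCoupling
    (fun i => (S.lam_pos i).le) S.lam_sum fun q : g.support => hg.1 q]
  exact exists_perfectlyCalibrated_iff_exists_isMartingaleCoupling hg

end PersuasiveCalibration
end
end
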